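/- Let R be a commutative ring, M an n×n matrix over R, and write det(1 - t·M) = 1 + a₁t + a₂t² + ⋯ (so a_j is the j-th coefficient of the reversed characteristic polynomial, with a₀ = 1). Then for every k > 0 the identity k·a_k + tr(M)·a_{k-1} + tr(M²)·a_{k-2} + ⋯ + tr(M^{k-1})·a₁ + tr(M^k) = 0 holds in R. -/

import Mathlib

theorem aux_jacobi {R : Type*} [CommRing R] {n : ℕ}
    (A : Matrix (Fin n) (Fin n) (Polynomial R)) :
    Polynomial.derivative A.det =
      (A.adjugate * A.map (fun p => Polynomial.derivative p)).trace := by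
  have h1 : ∀ i, (A.adjugate * A.map (fun p => Polynomial.derivative p)) i i =
      (A.updateCol i (fun j => Polynomial.derivative (A j i))).det := by
    intro i
    rw [← Matrix.cramer_apply, Matrix.cramer_eq_adjugate_mulVec]
    simp [Matrix.mul_apply, Matrix.mulVec, dotProduct]
  simp only [Matrix.trace, Matrix.diag_apply, h1]
  simp only [Matrix.det_apply']
  rw [Finset.sum_comm, Polynomial.derivative_sum]
  refine Finset.sum_congr rfl fun σ _ => ?_
  rw [← Finset.mul_sum, Polynomial.derivative_intCast_mul, Polynomial.derivative_prod_finset]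
  congr 1
  refine Finset.sum_congr rfl fun i _ => ?_
  rw [← Finset.mul_prod_erase Finset.univ _ (Finset.mem_univ i), mul_comm]
  congr 1
  · simp
  · refine Finset.prod_congr rfl fun j hj => ?_
    rw [Matrix.updateCol_ne (Finset.ne_of_mem_erase hj)]

/-- Newton-type recursion relating the coefficients of the reversed characteristic
polynomial `det(1 - t·M) = 1 + a₁ t + a₂ t² + ⋯` to the traces of powers of `M`:
for every `k > 0`,
`k·a_k + tr(M)·a_{k-1} + tr(M²)·a_{k-2} + ⋯ + tr(M^{k-1})·a₁ + tr(M^k) = 0`. -/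
theorem trace_coeff_recursion (R : Type*) [CommRing R] (n : ℕ)
    (M : Matrix (Fin n) (Fin n) R) (a : ℕ → R)
    (ha : ∀ j, a j = ((1 - (Polynomial.X : Polynomial R) • M.map Polynomial.C).det).coeff j)
    (k : ℕ) (hk : 0 < k) :
    k • a k + (∑ i ∈ Finset.Icc 1 (k - 1), (M ^ i).trace * a (k - i)) + (M ^ k).trace = 0 := by
  obtain ⟨m, rfl⟩ : ∃ m, k = m + 1 := ⟨k - 1, by omega⟩
  have ha0 : a 0 = 1 := by
    rw [ha, Polynomial.coeff_zero_eq_eval_zero]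
    exact Matrix.eval_charpolyRev (M := M)
  set A : Matrix (Fin n) (Fin n) (Polynomial R) :=
    1 - (Polynomial.X : Polynomial R) • M.map Polynomial.C with hA
  let b : ℕ → Matrix (Fin n) (Fin n) R := fun j => A.adjugate.map (fun p => p.coeff j)
  have hadj : A.adjugate = A.det • (1 : Matrix (Fin n) (Fin n) (Polynomial R)) +
      (Polynomial.X : Polynomial R) • (A.adjugate * M.map Polynomial.C) := by
    rw [← Matrix.adjugate_mul]
    conv_rhs => enter [1, 2]; rw [hA]
    rw [mul_sub, mul_one, Matrix.mul_smul, sub_add_cancel]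
  have hcoef : ∀ j i l, ((A.adjugate * M.map Polynomial.C) i l).coeff j = (b j * M) i l := by
    intro j i l
    simp [Matrix.mul_apply, b, Polynomial.finsetSum_coeff]
  have hone : ∀ j (i l : Fin n), ((A.det • (1 : Matrix (Fin n) (Fin n) (Polynomial R))) i l).coeff j
      = (a j • (1 : Matrix (Fin n) (Fin n) R)) i l := by
    intro j i l
    rw [ha]
    by_cases h : i = l <;> simp [Matrix.one_apply, h]
  have hb0 : b 0 = a 0 • 1 := by
    ext i l
    rw [← hone]
    change (A.adjugate i l).coeff 0 = _
    conv_lhs => rw [hadj]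
    simp
  have hbs : ∀ j, b (j + 1) = a (j + 1) • 1 + b j * M := by
    intro j
    ext i l
    rw [Matrix.add_apply, ← hone, ← hcoef]
    change (A.adjugate i l).coeff (j + 1) = _
    conv_lhs => rw [hadj]
    rw [Matrix.add_apply, Matrix.smul_apply _ (A.adjugate * _), Polynomial.coeff_add, smul_eq_mul,
      Polynomial.coeff_X_mul]
  have hb : ∀ j, b j = ∑ i ∈ Finset.range (j + 1), a (j - i) • M ^ i := by
    intro j
    induction j with
    | zero => simp [hb0]
    | succ j ih =>
      rw [hbs, ih, Finset.sum_range_succ' _ (j + 1), Finset.sum_mul, add_comm]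
      simp [pow_succ]
  have hd : A.map (fun p => Polynomial.derivative p) = - M.map Polynomial.C := by
    ext1 i l
    by_cases h : i = l <;> simp [hA, Matrix.one_apply, h]
  have hJ := congrArg (fun p => Polynomial.coeff p m) (aux_jacobi A)
  simp only [hd, Matrix.mul_neg, Matrix.trace_neg, Polynomial.coeff_neg,
    Polynomial.coeff_derivative, ← ha] at hJ
  have ht : ((A.adjugate * M.map Polynomial.C).trace).coeff m = (b m * M).trace := by
    simp only [Matrix.trace, Matrix.diag_apply, Polynomial.finsetSum_coeff, hcoef]
  rw [ht, hb, Finset.sum_mul, Matrix.trace_sum, Finset.sum_range_succ] at hJ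
  simp only [Matrix.smul_mul, ← pow_succ, Matrix.trace_smul, smul_eq_mul, Nat.sub_self, ha0,
    one_mul] at hJ
  have hs : ∑ i ∈ Finset.Icc 1 (m + 1 - 1), (M ^ i).trace * a (m + 1 - i) =
      ∑ i ∈ Finset.range m, a (m - i) * (M ^ (i + 1)).trace := by
    symm
    refine Finset.sum_bij (fun i _ => i + 1) ?_ ?_ ?_ ?_
    · intro i hi
      simp only [Finset.mem_range, Finset.mem_Icc] at *
      omega
    · intro i _ j _ h
      omega
    · intro i hi
      simp only [Finset.mem_Icc] at hi
      exact ⟨i - 1, by simp only [Finset.mem_range]; omega, by omega⟩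
    · intro i _
      rw [Nat.add_sub_add_right, mul_comm]
  rw [hs, nsmul_eq_mul]
  push_cast
  linear_combination hJ
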